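/- arXiv:1305.1556 — 3 statements merged into one kernel-verified Lean document; each statement's English description precedes it below -/
import Mathlib

section
/- Let R be a commutative ring, I an ideal of R, and N an R-module. The ideal transform D_I(N) = colim_n Hom_R(Iⁿ, N) satisfies Γ_I(D_I(N)) = 0, i.e., D_I(N) has no nonzero I-torsion elements. -/
open Submodule

variable {R : Type*} [CommRing R] {M : Type*} [AddCommGroup M] [Module R M]

/-- A submodule `N` of `M` is *prime* if `N ≠ M` and whenever `r • m ∈ N`,
either `r ∈ (N :ᵣ M)` or `m ∈ N`. Here `(N :ᵣ M)` is `N.colon ⊤`. -/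
def IsPrimeSubmodule (N : Submodule R M) : Prop :=
  N ≠ ⊤ ∧ ∀ (r : R) (m : M), r • m ∈ N → r ∈ N.colon ⊤ ∨ m ∈ N

/-- The prime spectrum of the module `M`: the set of prime submodules. -/
def MSpec (R M : Type*) [CommRing R] [AddCommGroup M] [Module R M] :=
  {P : Submodule R M // IsPrimeSubmodule P}

/-- `V(N) = {P ∈ Spec(M) | (N : M) ⊆ (P : M)}`. -/
def VV (N : Submodule R M) : Set (MSpec R M) :=
  {P | N.colon ⊤ ≤ P.1.colon ⊤}

/-- The basic open set `X_r = Spec(M) \ V(rM)`. -/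
def Xb (r : R) : Set (MSpec R M) :=
  (VV (Ideal.span {r} • (⊤ : Submodule R M)))ᶜ


/-- The `I`-torsion elements of an `R`-module `N`:
`Γ_I(N) = ⋃_{n ≥ 1} {x ∈ N | Iⁿ • x = 0}`. -/
def GammaSet (I : Ideal R) {N : Type*} [AddCommGroup N] [Module R N] : Set N :=
  {x | ∃ n : ℕ, 1 ≤ n ∧ ∀ a ∈ I ^ n, a • x = 0}

/-- The component modules `Hom_R(Iⁿ, N)` of the ideal transform system. -/
abbrev TransGrp (I : Ideal R) (N : Type*) [AddCommGroup N] [Module R N] (n : ℕ) :=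
  (I ^ n : Ideal R) →ₗ[R] N

/-- The transition maps of the ideal transform system, induced by restriction along
`Iᵐ ⊆ Iⁿ` for `n ≤ m`. -/
def transMap (I : Ideal R) (N : Type*) [AddCommGroup N] [Module R N] :
    ∀ n m : ℕ, n ≤ m → TransGrp I N n →ₗ[R] TransGrp I N m := fun _ _ h =>
  LinearMap.lcomp R N (Submodule.inclusion (Ideal.pow_le_pow_right h))

/-- The ideal transform `D_I(N) = colim_n Hom_R(Iⁿ, N)`. -/
def IdealTransform (I : Ideal R) (N : Type*) [AddCommGroup N] [Module R N] :=
  Module.DirectLimit (TransGrp I N) (transMap I N)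

noncomputable instance (I : Ideal R) (N : Type*) [AddCommGroup N] [Module R N] :
    AddCommGroup (IdealTransform I N) :=
  inferInstanceAs (AddCommGroup (Module.DirectLimit _ _))

noncomputable instance (I : Ideal R) (N : Type*) [AddCommGroup N] [Module R N] :
    Module R (IdealTransform I N) :=
  inferInstanceAs (Module R (Module.DirectLimit _ _))

instance transMap_directedSystem (I : Ideal R) (N : Type*) [AddCommGroup N] [Module R N] :
    DirectedSystem (TransGrp I N) (fun i j h => transMap I N i j h) where
  map_self := by intros; rfl
  map_map := by intros; rfl

/-- The ideal transform has no nonzero `I`-torsion: `Γ_I(D_I(N)) = 0`. -/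
theorem gamma_idealTransform_eq_zero [IsNoetherianRing R] (I : Ideal R)
    {N : Type*} [AddCommGroup N] [Module R N] :
    ∀ y : IdealTransform I N, y ∈ GammaSet I → y = 0 := by
  rintro y ⟨k, -, hk⟩
  obtain ⟨n, f, rfl⟩ : ∃ n f, Module.DirectLimit.of R ℕ (TransGrp I N) (transMap I N) n f = y :=
    Module.DirectLimit.exists_of y
  have key : ∀ a ∈ I ^ k, ∃ m, ∃ h : n ≤ m, transMap I N n m h (a • f) = 0 := by
    intro a ha
    have h1 : Module.DirectLimit.of R ℕ (TransGrp I N) (transMap I N) n (a • f) = 0 := by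
      rw [map_smul]
      exact hk a ha
    exact Module.DirectLimit.of.zero_exact h1
  obtain ⟨s, hs⟩ := IsNoetherian.noetherian (I ^ k)
  have unif : ∀ t : Finset R, t ⊆ s → ∃ m, n ≤ m ∧ ∀ a ∈ t, ∀ x (hx : x ∈ I ^ n), x ∈ I ^ m →
      a • f ⟨x, hx⟩ = 0 := by
    classical
    intro t
    induction t using Finset.induction_on with
    | empty => exact fun _ => ⟨n, le_rfl, by simp⟩
    | insert a t _ ih =>
      intro ht
      obtain ⟨m, hm, h⟩ := ih fun b hb => ht (Finset.mem_insert_of_mem hb)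
      obtain ⟨m', hm', h'⟩ := key a (hs ▸ Submodule.subset_span (ht (Finset.mem_insert_self a t)))
      refine ⟨max m m', le_max_of_le_left hm, fun b hb x hx hxm => ?_⟩
      rcases Finset.mem_insert.1 hb with rfl | hb
      · exact LinearMap.congr_fun h' ⟨x, Ideal.pow_le_pow_right (le_max_right m m') hxm⟩
      · exact h b hb x hx (Ideal.pow_le_pow_right (le_max_left m m') hxm)
  obtain ⟨m, hm, h⟩ := unif s subset_rfl
  have h2 : ∀ a ∈ I ^ k, ∀ x (hx : x ∈ I ^ n), x ∈ I ^ m → a • f ⟨x, hx⟩ = 0 := by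
    intro a ha x hx hxm
    rw [← hs] at ha
    induction ha using Submodule.span_induction with
    | mem a ha => exact h a ha x hx hxm
    | zero => simp
    | add a b _ _ h1 h2 => rw [add_smul, h1, h2, add_zero]
    | smul r a _ h1 => rw [smul_assoc, h1, smul_zero]
  have h3 : ∀ z ∈ I ^ k * I ^ m, ∃ hz : z ∈ I ^ n, f ⟨z, hz⟩ = 0 := by
    intro z hz
    induction hz using Submodule.mul_induction_on' with
    | mem_mul_mem a ha x hx =>
      have hx' := Ideal.pow_le_pow_right hm hx
      refine ⟨Ideal.mul_mem_left _ _ hx', ?_⟩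
      have := h2 a ha x hx' hx
      rw [← map_smul] at this
      exact this
    | add x _ y _ h1 h2 =>
      obtain ⟨hx, h1⟩ := h1
      obtain ⟨hy, h2⟩ := h2
      refine ⟨add_mem hx hy, ?_⟩
      have := map_add f ⟨x, hx⟩ ⟨y, hy⟩
      rw [h1, h2, add_zero] at this
      exact this
  have hle : n ≤ k + m := le_add_left hm
  have h4 : transMap I N n (k + m) hle f = 0 := by
    ext ⟨z, hz⟩
    obtain ⟨_, h⟩ := h3 z (by rwa [← pow_add])
    exact h
  have h5 := Module.DirectLimit.of_f (R := R) (G := TransGrp I N) (f := transMap I N) (hij := hle)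
    (x := f)
  rw [h4, map_zero] at h5
  exact h5.symm
end

section
/- Let R be a Noetherian ring, I an ideal of R, and N an R-module. If I contains an N-regular sequence of length 2 (elements a, b ∈ I with a a nonzerodivisor on N and b a nonzerodivisor on N/aN, and N/(aN + bN) ≠ 0), then the natural map N → D_I(N) = colim_n Hom_R(Iⁿ, N) is an isomorphism. -/
open Submodule

variable {R : Type*} [CommRing R] {M : Type*} [AddCommGroup M] [Module R M]

theorem aux_pow_cancel {R N : Type*} [CommRing R] [AddCommGroup N] [Module R N] (a : R)
    (h : ∀ x : N, a • x = 0 → x = 0) (n : ℕ) (x : N) (hx : a ^ n • x = 0) : x = 0 := by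
  induction n with
  | zero => simpa using hx
  | succ k ih =>
    apply ih
    apply h
    rw [smul_smul, ← pow_succ']
    exact hx

theorem aux_reg_pow {R N : Type*} [CommRing R] [AddCommGroup N] [Module R N] (a b : R)
    (h : ∀ x : N, a • x = 0 → x = 0)
    (hb : ∀ y z : N, b • y = a • z → ∃ w, y = a • w) (k : ℕ) :
    ∀ y z : N, b • y = a ^ k • z → ∃ w, y = a ^ k • w := by
  induction k with
  | zero => intro y z _; exact ⟨y, by simp⟩
  | succ k ih =>
    intro y z hy
    rw [pow_succ', ← smul_smul] at hy
    obtain ⟨y', rfl⟩ := hb _ _ hy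
    have : b • y' = a ^ k • z := by
      rw [← sub_eq_zero]
      apply h
      rw [smul_sub, ← hy, smul_comm, sub_self]
    obtain ⟨w, rfl⟩ := ih _ _ this
    exact ⟨w, by rw [pow_succ', smul_smul]⟩

theorem aux_reg_pow_pow {R N : Type*} [CommRing R] [AddCommGroup N] [Module R N] (c b : R)
    (hb : ∀ y z : N, b • y = c • z → ∃ w, y = c • w) (k : ℕ) :
    ∀ y z : N, b ^ k • y = c • z → ∃ w, y = c • w := by
  induction k with
  | zero => intro y z hy; exact ⟨z, by simpa using hy⟩
  | succ k ih =>
    intro y z hy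
    rw [pow_succ, ← smul_smul] at hy
    obtain ⟨w, hw⟩ := ih _ _ hy
    exact hb _ _ hw

/-- If `I` contains an `N`-regular sequence `a, b` of length 2, then the natural map
`N → D_I(N)`, `x ↦ (r ↦ r • x)`, is an isomorphism. -/
theorem toIdealTransform_bijective [IsNoetherianRing R] (I : Ideal R)
    {N : Type*} [AddCommGroup N] [Module R N] (a b : R) (ha : a ∈ I) (hb : b ∈ I)
    (hareg : ∀ x : N, a • x = 0 → x = 0)
    (hbreg : ∀ y : N ⧸ (Ideal.span {a} • (⊤ : Submodule R N)), b • y = 0 → y = 0)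
    (hproper : (Ideal.span {a} • (⊤ : Submodule R N)) ⊔
      (Ideal.span {b} • (⊤ : Submodule R N)) ≠ ⊤) :
    Function.Bijective (fun x : N =>
      Module.DirectLimit.of R ℕ (TransGrp I N) (transMap I N) 0
        ((LinearMap.toSpanSingleton R N x).comp (Submodule.subtype (I ^ 0)))) := by
  have hb' : ∀ y z : N, b • y = a • z → ∃ w, y = a • w := by
    intro y z hy
    have h1 := hbreg (Submodule.Quotient.mk y) (by
      rw [← Submodule.Quotient.mk_smul, Submodule.Quotient.mk_eq_zero, hy]
      exact Submodule.smul_mem_smul (Ideal.mem_span_singleton_self a) trivial)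
    rw [Submodule.Quotient.mk_eq_zero, Submodule.ideal_span_singleton_smul] at h1
    obtain ⟨w, _, hw⟩ := h1
    exact ⟨w, hw.symm⟩
  haveI : DirectedSystem (TransGrp I N) (fun i j h => transMap I N i j h) :=
    { map_self := fun _ _ => rfl
      map_map := fun _ _ _ _ _ _ => rfl }
  constructor
  · intro x y hxy
    dsimp only at hxy
    rw [← sub_eq_zero, ← map_sub] at hxy
    obtain ⟨n, hn, h0⟩ := Module.DirectLimit.of.zero_exact hxy
    have h1 := LinearMap.congr_fun h0 ⟨a ^ n, Ideal.pow_mem_pow ha n⟩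
    have h2 : a ^ n • x - a ^ n • y = 0 := h1
    rw [← smul_sub] at h2
    exact sub_eq_zero.mp (aux_pow_cancel a hareg n _ h2)
  · intro z
    obtain ⟨n, f, rfl⟩ := Module.DirectLimit.exists_of z
    have key : ∀ r s : (I ^ n : Ideal R), (r : R) • f s = (s : R) • f r := by
      intro r s
      rw [← map_smul, ← map_smul]
      congr 1
      ext
      simp [mul_comm]
    let A : (I ^ n : Ideal R) := ⟨a ^ n, Ideal.pow_mem_pow ha n⟩
    let B : (I ^ n : Ideal R) := ⟨b ^ n, Ideal.pow_mem_pow hb n⟩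
    obtain ⟨x, hx⟩ := aux_reg_pow_pow (a ^ n) b (aux_reg_pow a b hareg hb' n) n
      (f A) (f B) (key B A)
    refine ⟨x, ?_⟩
    dsimp only
    rw [← Module.DirectLimit.of_f (hij := Nat.zero_le n)]
    congr 1
    ext r
    change (r : R) • x = f r
    rw [← sub_eq_zero]
    apply aux_pow_cancel a hareg n
    have h3 : a ^ n • f r = (r : R) • f A := key A r
    rw [smul_sub, h3, hx, smul_comm, sub_self]
end

section
/- Let R be a PID, a ∈ R a nonzero element, I = (a), and N an R-module. Then the ideal transform D_I(N) = colim_n Hom_R(Iⁿ, N) is isomorphic to the localization N_a of N at the multiplicative set {1, a, a², …}. -/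
open Submodule

variable {R : Type*} [CommRing R] {M : Type*} [AddCommGroup M] [Module R M]

theorem aux_mem_pow (a : R) (n : ℕ) : a ^ n ∈ (Ideal.span {a} ^ n : Ideal R) :=
  Ideal.pow_mem_pow (Ideal.mem_span_singleton_self a) n

/-- Evaluation at `aⁿ` followed by division by `aⁿ`. -/
noncomputable def auxMap (a : R) (N : Type*) [AddCommGroup N] [Module R N] (n : ℕ) :
    TransGrp (Ideal.span {a}) N n →ₗ[R] LocalizedModule (Submonoid.powers a) N :=
  (LocalizedModule.divBy (⟨a ^ n, n, rfl⟩ : Submonoid.powers a)).comp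
    ((LocalizedModule.mkLinearMap (Submonoid.powers a) N).comp
      (LinearMap.applyₗ (⟨a ^ n, aux_mem_pow a n⟩ : (Ideal.span {a} ^ n : Ideal R))))

theorem auxMap_apply (a : R) (N : Type*) [AddCommGroup N] [Module R N] (n : ℕ)
    (φ : TransGrp (Ideal.span {a}) N n) :
    auxMap a N n φ = LocalizedModule.mk (φ ⟨a ^ n, aux_mem_pow a n⟩)
      (⟨a ^ n, n, rfl⟩ : Submonoid.powers a) := by
  simp only [auxMap, LocalizedModule.divBy, LocalizedModule.mkLinearMap, LinearMap.comp_apply,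
    LinearMap.coe_mk, AddHom.coe_mk]
  erw [LocalizedModule.liftOn_mk]
  simp

theorem transMap_eval (a : R) (N : Type*) [AddCommGroup N] [Module R N] (n k : ℕ)
    (h : n ≤ n + k) (φ : TransGrp (Ideal.span {a}) N n) :
    transMap (Ideal.span {a}) N n (n + k) h φ ⟨a ^ (n + k), aux_mem_pow a (n + k)⟩ =
      a ^ k • φ ⟨a ^ n, aux_mem_pow a n⟩ := by
  rw [← map_smul]
  change φ _ = φ _
  congr 1
  ext
  simp [pow_add, mul_comm]

theorem transGrp_ext_zero (a : R) (N : Type*) [AddCommGroup N] [Module R N] (n : ℕ)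
    (φ : TransGrp (Ideal.span {a}) N n) (h : φ ⟨a ^ n, aux_mem_pow a n⟩ = 0) : φ = 0 := by
  ext ⟨y, hy⟩
  have hy' := hy
  rw [Ideal.span_singleton_pow, Ideal.mem_span_singleton'] at hy'
  obtain ⟨c, rfl⟩ := hy'
  have : (⟨c * a ^ n, hy⟩ : (Ideal.span {a} ^ n : Ideal R)) =
      c • ⟨a ^ n, aux_mem_pow a n⟩ := by ext; simp
  rw [this, map_smul, h, smul_zero, LinearMap.zero_apply]

/-- Over a PID, the ideal transform of `N` at `I = (a)` (`a ≠ 0`) is isomorphic to the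
localization `N_a` of `N` at the powers of `a`. -/
theorem idealTransform_iso_localizedModule [IsDomain R] [IsPrincipalIdealRing R]
    (a : R) (ha : a ≠ 0) (N : Type*) [AddCommGroup N] [Module R N] :
    Nonempty (IdealTransform (Ideal.span {a}) N ≃ₗ[R]
      LocalizedModule (Submonoid.powers a) N) := by
  refine ⟨LinearEquiv.ofBijective (Module.DirectLimit.lift R ℕ _ (transMap (Ideal.span {a}) N)
    (auxMap a N) ?_ : Module.DirectLimit _ (transMap (Ideal.span {a}) N) →ₗ[R] _) ⟨?_, ?_⟩⟩
  · intro i j hij φ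
    obtain ⟨k, rfl⟩ := Nat.exists_eq_add_of_le hij
    rw [auxMap_apply, auxMap_apply, transMap_eval, LocalizedModule.mk_eq]
    refine ⟨1, ?_⟩
    simp only [Submonoid.smul_def, smul_smul, one_smul, pow_add]
  · refine (injective_iff_map_eq_zero _).2 fun z hz => ?_
    obtain ⟨n, φ, rfl⟩ := Module.DirectLimit.exists_of z
    rw [Module.DirectLimit.lift_of, auxMap_apply,
      ← LocalizedModule.zero_mk (1 : Submonoid.powers a), LocalizedModule.mk_eq] at hz
    obtain ⟨⟨_, k, rfl⟩, hk⟩ := hz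
    simp only [Submonoid.smul_def, smul_zero, OneMemClass.coe_one, one_smul] at hk
    rw [← Module.DirectLimit.of_f (hij := Nat.le_add_right n k),
      transGrp_ext_zero a N (n + k) _ ((transMap_eval a N n k _ φ).trans hk), map_zero]
  · intro z
    induction z using LocalizedModule.induction_on with
    | h x s =>
    obtain ⟨_, n, rfl⟩ := s
    have hn : a ^ n ≠ 0 := pow_ne_zero n ha
    let e := LinearEquiv.toSpanNonzeroSingleton R R (a ^ n) hn
    have hI : (Ideal.span {a} ^ n : Ideal R) = Submodule.span R {a ^ n} :=
      Ideal.span_singleton_pow a n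
    let φ : TransGrp (Ideal.span {a}) N n :=
      (LinearMap.toSpanSingleton R N x).comp
        (e.symm.toLinearMap.comp (LinearEquiv.ofEq _ _ hI).toLinearMap)
    have hφ : φ ⟨a ^ n, aux_mem_pow a n⟩ = x := by
      have : e.symm (LinearEquiv.ofEq _ _ hI ⟨a ^ n, aux_mem_pow a n⟩) = 1 := by
        rw [LinearEquiv.symm_apply_eq]
        ext
        simp [e]
      change e.symm (LinearEquiv.ofEq _ _ hI ⟨a ^ n, aux_mem_pow a n⟩) • x = x
      rw [this, one_smul]
    refine ⟨Module.DirectLimit.of R ℕ _ _ n φ, ?_⟩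
    rw [Module.DirectLimit.lift_of, auxMap_apply, hφ]
end
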